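/- arXiv:0711.4379 — 4 statements merged into one kernel-verified Lean document; each statement's English description precedes it below -/
import Mathlib

section
/- Let H be a complex Hilbert space, c : H → H a self-adjoint unitary (c* = c and c∘c = id), and let p, P : H → H be orthogonal projections each commuting with c (c∘p = p∘c and c∘P = P∘c). Suppose u₁, u₂, v₁, v₂ ∈ H satisfy: u₁ = c u₂; p u₁ = u₁; P v₁ = 0; p v₂ = 0; and the homogeneous system u₁ + v₁ + c v₂ = 0 and c v₁ − (1−P)(u₂ + v₂) = 0. Then u₁ = 0, u₂ = 0, v₁ = 0 and v₂ = 0. -/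
open ContinuousLinearMap

/-- Triviality of the kernel of the operator-valued symbol `σ_X` of the
boundary reduction of the edge boundary value problem (system (sistema1), Part A). -/
theorem statement1 {H : Type*} [NormedAddCommGroup H] [InnerProductSpace ℂ H] [CompleteSpace H]
    (c p P : H →L[ℂ] H)
    (hc_sa : ContinuousLinearMap.adjoint c = c) (hc2 : c ∘L c = 1)
    (hp_sa : ContinuousLinearMap.adjoint p = p) (hp2 : p ∘L p = p)
    (hP_sa : ContinuousLinearMap.adjoint P = P) (hP2 : P ∘L P = P)
    (hcp : c ∘L p = p ∘L c) (hcP : c ∘L P = P ∘L c)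
    (u₁ u₂ v₁ v₂ : H)
    (hu : u₁ = c u₂) (hpu : p u₁ = u₁) (hPv : P v₁ = 0) (hpv : p v₂ = 0)
    (heq1 : u₁ + v₁ + c v₂ = 0)
    (heq2 : c v₁ - ((1 : H →L[ℂ] H) - P) (u₂ + v₂) = 0) :
    u₁ = 0 ∧ u₂ = 0 ∧ v₁ = 0 ∧ v₂ = 0 := by
  have cc : ∀ x, c (c x) = x := fun x => by
    simpa using congrArg (fun f : H →L[ℂ] H => f x) hc2
  have cp : ∀ x, c (p x) = p (c x) := fun x => by
    simpa using congrArg (fun f : H →L[ℂ] H => f x) hcp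
  have cP : ∀ x, c (P x) = P (c x) := fun x => by
    simpa using congrArg (fun f : H →L[ℂ] H => f x) hcP
  have h1 : u₂ + v₂ = -(c v₁) := by
    have h := congrArg c heq1
    rw [map_add, map_add, hu, cc, cc, map_zero] at h
    rw [eq_neg_iff_add_eq_zero, ← h]
    abel
  have hPc : P (c v₁) = 0 := by rw [← cP, hPv, map_zero]
  have h2 : c v₁ + c v₁ = 0 := by
    rw [h1] at heq2
    simpa [hPc] using heq2
  have h3 : c v₁ = 0 := by
    rw [← two_smul ℂ] at h2
    exact (smul_eq_zero.mp h2).resolve_left two_ne_zero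
  have hv1 : v₁ = 0 := by rw [← cc v₁, h3, map_zero]
  have hu1 : u₁ = 0 := by
    have h := congrArg p heq1
    rw [map_add, map_add, hpu, hv1, ← cp, hpv] at h
    simpa using h
  have hu2 : u₂ = 0 := by rw [← cc u₂, ← hu, hu1, map_zero]
  refine ⟨hu1, hu2, hv1, ?_⟩
  rw [hu2, h3] at h1
  simpa using h1
end

section
/- Let H be a complex Hilbert space, c : H → H a self-adjoint unitary (c* = c and c∘c = id), and let p, P : H → H be orthogonal projections each commuting with c (c∘p = p∘c and c∘P = P∘c). Then for every g₁ ∈ H and every g₂ ∈ H with P g₂ = 0 there exist u₁, v₁, v₂ ∈ H with p u₁ = u₁, P v₁ = 0 and p v₂ = 0 such that, setting u₂ := c u₁, one has u₁ + v₁ + c v₂ = g₁ and c v₁ − (1−P)(u₂ + v₂) = g₂. -/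
open ContinuousLinearMap

/-- Triviality of the cokernel (surjectivity) of the operator-valued symbol
`σ_X` of the boundary reduction of the edge boundary value problem (system (sistema1),
Part A of the proof of the Fredholm property). -/
theorem statement2 {H : Type*} [NormedAddCommGroup H] [InnerProductSpace ℂ H] [CompleteSpace H]
    (c p P : H →L[ℂ] H)
    (hc_sa : ContinuousLinearMap.adjoint c = c) (hc2 : c ∘L c = 1)
    (hp_sa : ContinuousLinearMap.adjoint p = p) (hp2 : p ∘L p = p)
    (hP_sa : ContinuousLinearMap.adjoint P = P) (hP2 : P ∘L P = P)
    (hcp : c ∘L p = p ∘L c) (hcP : c ∘L P = P ∘L c) :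
    ∀ g₁ g₂ : H, P g₂ = 0 →
      ∃ u₁ v₁ v₂ : H, p u₁ = u₁ ∧ P v₁ = 0 ∧ p v₂ = 0 ∧
        u₁ + v₁ + c v₂ = g₁ ∧
        c v₁ - ((1 : H →L[ℂ] H) - P) (c u₁ + v₂) = g₂ := by
  intro g₁ g₂ hg
  have c2 : ∀ x, c (c x) = x := fun x => DFunLike.congr_fun hc2 x
  have p2 : ∀ x, p (p x) = p x := fun x => DFunLike.congr_fun hp2 x
  have P2 : ∀ x, P (P x) = P x := fun x => DFunLike.congr_fun hP2 x
  have cp : ∀ x, p (c x) = c (p x) := fun x => (DFunLike.congr_fun hcp x).symm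
  have cP : ∀ x, P (c x) = c (P x) := fun x => (DFunLike.congr_fun hcP x).symm
  obtain ⟨v, hv⟩ : ∃ v, v = (1 / 2 : ℂ) • (g₁ - P g₁ + c g₂) := ⟨_, rfl⟩
  have hPv : P v = 0 := by
    rw [hv]; simp [P2, cP, hg]
  have hvv : v + v = g₁ - P g₁ + c g₂ := by
    rw [hv, ← add_smul]; norm_num
  have hcv : c v + c v = c g₁ - c (P g₁) + g₂ := by
    rw [← map_add, hvv]; simp [c2]
  refine ⟨p (g₁ - v), v, c ((g₁ - v) - p (g₁ - v)), p2 _, hPv, ?_, ?_, ?_⟩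
  · rw [cp, map_sub, p2, sub_self, map_zero]
  · rw [c2]; abel
  · have h1 : c (p (g₁ - v)) + c ((g₁ - v) - p (g₁ - v)) = c g₁ - c v := by
      rw [← map_add, ← map_sub]; congr 1; abel
    have h2 : ((1 : H →L[ℂ] H) - P) (c g₁ - c v) = c g₁ - c v - c (P g₁) := by
      simp [cP, hPv]
    rw [h1, h2]
    have : c v - (c g₁ - c v - c (P g₁)) = (c v + c v) - c g₁ + c (P g₁) := by abel
    rw [this, hcv]; abel
end

section
/- Let W be a complex Hilbert space, and let r, t be real numbers with r > 0, t > 0 and r² + t² = 1. Let a, c : W → W be bounded self-adjoint operators with a∘a = r²·id, c∘c = t²·id and a∘c = c∘a, and let p be an orthogonal projection on W commuting with both a and c. Set π₊ := (2r)⁻¹(r·id + a) (the positive spectral projection of a; it is an orthogonal projection commuting with p). Suppose u₁, u₂, v₁, v₂ ∈ W satisfy: p u₁ = u₁ and p u₂ = u₂; the range conditions (1+a)u₁ + c u₂ = 2u₁ and c u₁ + (1−a)u₂ = 2u₂; p π₊ v₁ = 0; p v₂ = 0; and the homogeneous equations u₁ + v₁ + c v₂ = 0 and c v₁ − (1 −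 pπ₊)(u₂ + v₂) = 0. Then u₁ = 0, u₂ = 0, v₁ = 0 and v₂ = 0. -/
open ContinuousLinearMap

/-- Triviality of the kernel of the principal symbol `σ_{∂M}` of the
boundary reduction of the edge boundary value problem at a cotangent point `(ξ,η)` with
`ξ ≠ 0`, `η ≠ 0`, `|ξ|² + |η|² = 1` (system (sistema2)/(sistema3), Part B). -/
theorem statement4 {W : Type*} [NormedAddCommGroup W] [InnerProductSpace ℂ W] [CompleteSpace W]
    (r t : ℝ) (hr : 0 < r) (ht : 0 < t) (hrt : r ^ 2 + t ^ 2 = 1)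
    (a c p : W →L[ℂ] W)
    (ha_sa : ContinuousLinearMap.adjoint a = a) (hc_sa : ContinuousLinearMap.adjoint c = c)
    (haa : a ∘L a = ((r ^ 2 : ℝ) : ℂ) • (1 : W →L[ℂ] W))
    (hcc : c ∘L c = ((t ^ 2 : ℝ) : ℂ) • (1 : W →L[ℂ] W))
    (hac : a ∘L c = c ∘L a)
    (hp_sa : ContinuousLinearMap.adjoint p = p) (hp2 : p ∘L p = p)
    (hpa : p ∘L a = a ∘L p) (hpc : p ∘L c = c ∘L p)
    (πplus : W →L[ℂ] W)
    (hπ : πplus = ((2 * r : ℝ) : ℂ)⁻¹ • (((r : ℝ) : ℂ) • (1 : W →L[ℂ] W) + a))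
    (u₁ u₂ v₁ v₂ : W)
    (hpu₁ : p u₁ = u₁) (hpu₂ : p u₂ = u₂)
    (hQ₁ : u₁ + a u₁ + c u₂ = (2 : ℂ) • u₁)
    (hQ₂ : c u₁ + (u₂ - a u₂) = (2 : ℂ) • u₂)
    (hv₁ : p (πplus v₁) = 0) (hv₂ : p v₂ = 0)
    (heq1 : u₁ + v₁ + c v₂ = 0)
    (heq2 : c v₁ - ((1 : W →L[ℂ] W) - p ∘L πplus) (u₂ + v₂) = 0) :
    u₁ = 0 ∧ u₂ = 0 ∧ v₁ = 0 ∧ v₂ = 0 := by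
  have hr0 : (r : ℂ) ≠ 0 := by exact_mod_cast hr.ne'
  have h2r : ((2 * r : ℝ) : ℂ) ≠ 0 := by exact_mod_cast (by positivity : (2 * r : ℝ) ≠ 0)
  have ht0 : ((t ^ 2 : ℝ) : ℂ) ≠ 0 := by exact_mod_cast (by positivity : (t ^ 2 : ℝ) ≠ 0)
  have hcc' : ∀ x, c (c x) = ((t ^ 2 : ℝ) : ℂ) • x := fun x => by
    simpa using DFunLike.congr_fun hcc x
  have hac' : ∀ x, a (c x) = c (a x) := fun x => DFunLike.congr_fun hac x
  have hpa' : ∀ x, p (a x) = a (p x) := fun x => DFunLike.congr_fun hpa x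
  have hpc' : ∀ x, p (c x) = c (p x) := fun x => DFunLike.congr_fun hpc x
  have hπ' : ∀ x, πplus x = ((2 * r : ℝ) : ℂ)⁻¹ • ((r : ℂ) • x + a x) := fun x => by
    rw [hπ]; rfl
  have hpv1 : p v₁ = -u₁ := by
    have h := congrArg p heq1
    simp only [map_add, hpc', hv₂, hpu₁, map_zero, add_zero] at h
    exact (neg_eq_of_add_eq_zero_right h).symm
  have hau1 : a u₁ = -((r : ℂ) • u₁) := by
    rw [hπ', map_smul, smul_eq_zero_iff_right (inv_ne_zero h2r), map_add, map_smul, hpa', hpv1,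
      map_neg, smul_neg] at hv₁
    have : -(a u₁) = (r : ℂ) • u₁ := (neg_add_eq_zero.mp hv₁).symm
    rw [← this, neg_neg]
  have hE : c v₁ - (u₂ + v₂) + πplus u₂ = 0 := by
    have h1 : ((1 : W →L[ℂ] W) - p ∘L πplus) (u₂ + v₂) = (u₂ + v₂) - p (πplus (u₂ + v₂)) := rfl
    have h2 : p (πplus (u₂ + v₂)) = πplus u₂ := by
      simp only [hπ', map_add, map_smul, hpa', hpu₂, hv₂, map_zero, smul_zero, add_zero]
    rw [h1, h2] at heq2
    rw [← heq2]; abel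
  have hpE : -(c u₁) - u₂ + πplus u₂ = 0 := by
    have h := congrArg p hE
    have h2 : p (πplus u₂) = πplus u₂ := by
      simp only [hπ', map_add, map_smul, hpa', hpu₂]
    simpa only [map_add, map_sub, hpc', hpv1, h2, hpu₂, hv₂, map_neg, map_zero, add_zero] using h
  have hv1 : v₁ = -u₁ - c v₂ := by
    have : v₁ = (u₁ + v₁ + c v₂) - u₁ - c v₂ := by abel
    rw [heq1] at this
    rw [this]; abel
  have hv2 : v₂ = 0 := by
    have h : c v₁ - (u₂ + v₂) + πplus u₂ - (-(c u₁) - u₂ + πplus u₂) = 0 := by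
      rw [hE, hpE, sub_zero]
    rw [hv1, map_sub, map_neg, hcc'] at h
    have h3 : (((t ^ 2 + 1 : ℝ)) : ℂ) • v₂ = 0 := by
      push_cast at h ⊢
      rw [← neg_eq_zero, ← h]; module
    refine (smul_eq_zero.mp h3).resolve_left ?_
    exact_mod_cast (by positivity : (t ^ 2 + 1 : ℝ) ≠ 0)
  have hcu2 : c u₂ = ((1 + r : ℝ) : ℂ) • u₁ := by
    rw [hau1] at hQ₁
    have : c u₂ = (u₁ + -((r : ℂ) • u₁) + c u₂) - u₁ + (r : ℂ) • u₁ := by abel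
    rw [this, hQ₁]; push_cast; module
  have hu2 : ((t ^ 2 : ℝ) : ℂ) • u₂ = ((1 + r : ℝ) : ℂ) • c u₁ := by
    rw [← hcc', hcu2, map_smul]
  have hau2 : a u₂ = -((r : ℂ) • u₂) := by
    apply smul_right_injective W ht0
    show ((t ^ 2 : ℝ) : ℂ) • a u₂ = ((t ^ 2 : ℝ) : ℂ) • -((r : ℂ) • u₂)
    rw [← map_smul, hu2, map_smul, hac', hau1, map_neg, map_smul, smul_neg, smul_neg,
      smul_comm _ (r : ℂ) u₂, hu2, smul_comm]
  have hπu2 : πplus u₂ = 0 := by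
    rw [hπ', hau2, add_neg_cancel, smul_zero]
  have hu2' : u₂ = -(c u₁) := by
    rw [hπu2, add_zero] at hpE
    exact (sub_eq_zero.mp hpE).symm
  have hu1 : u₁ = 0 := by
    rw [hu2', map_neg, hcc'] at hcu2
    have h3 : (((t ^ 2 + (1 + r) : ℝ)) : ℂ) • u₁ = 0 := by
      rw [Complex.ofReal_add, add_smul, ← hcu2, add_neg_cancel]
    refine (smul_eq_zero.mp h3).resolve_left ?_
    exact_mod_cast (by positivity : (t ^ 2 + (1 + r) : ℝ) ≠ 0)
  refine ⟨hu1, ?_, ?_, hv2⟩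
  · rw [hu2', hu1, map_zero, neg_zero]
  · rw [hv1, hu1, hv2, map_zero, neg_zero, sub_zero]
end

section
/- Let W be a complex Hilbert space, and let r, t be real numbers with r > 0, t > 0 and r² + t² = 1. Let a, c : W → W be bounded self-adjoint operators with a∘a = r²·id, c∘c = t²·id and a∘c = c∘a, and let p be an orthogonal projection on W commuting with both a and c. Set π₊ := (2r)⁻¹(r·id + a). Suppose u₁, u₂, v₁, v₂ ∈ W satisfy p u₁ = u₁, c u₂ = (1−a)u₁, p π₊ v₁ = 0, p v₂ = 0, and the first equation u₁ + v₁ + c v₂ = 0. Then the second equation c v₁ − (1 − pπ₊)(u₂ + v₂) = 0 holds if and only if (1 + t²) v₁ + (1 − π₊)(a u₁) = 0. -/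
open ContinuousLinearMap

/-- The intermediate equivalence in Part B of the proof of the Fredholm
property: the second equation of system (sistema3) is equivalent to
`(1 + |ξ|²) v₁ + (1 − σ(Π₊)(η)) c_Ω(η) u₁ = 0`. -/
theorem statement5 {W : Type*} [NormedAddCommGroup W] [InnerProductSpace ℂ W] [CompleteSpace W]
    (r t : ℝ) (hr : 0 < r) (ht : 0 < t) (hrt : r ^ 2 + t ^ 2 = 1)
    (a c p : W →L[ℂ] W)
    (ha_sa : ContinuousLinearMap.adjoint a = a) (hc_sa : ContinuousLinearMap.adjoint c = c)
    (haa : a ∘L a = ((r ^ 2 : ℝ) : ℂ) • (1 : W →L[ℂ] W))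
    (hcc : c ∘L c = ((t ^ 2 : ℝ) : ℂ) • (1 : W →L[ℂ] W))
    (hac : a ∘L c = c ∘L a)
    (hp_sa : ContinuousLinearMap.adjoint p = p) (hp2 : p ∘L p = p)
    (hpa : p ∘L a = a ∘L p) (hpc : p ∘L c = c ∘L p)
    (πplus : W →L[ℂ] W)
    (hπ : πplus = ((2 * r : ℝ) : ℂ)⁻¹ • (((r : ℝ) : ℂ) • (1 : W →L[ℂ] W) + a))
    (u₁ u₂ v₁ v₂ : W)
    (hpu₁ : p u₁ = u₁) (hcu₂ : c u₂ = u₁ - a u₁)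
    (hv₁ : p (πplus v₁) = 0) (hv₂ : p v₂ = 0)
    (heq1 : u₁ + v₁ + c v₂ = 0) :
    c v₁ - ((1 : W →L[ℂ] W) - p ∘L πplus) (u₂ + v₂) = 0 ↔
      ((1 + t ^ 2 : ℝ) : ℂ) • v₁ + (a u₁ - πplus (a u₁)) = 0 := by
  have hcc' : ∀ x, c (c x) = ((t ^ 2 : ℝ) : ℂ) • x := fun x => by
    have := DFunLike.congr_fun hcc x
    simpa using this
  have hac' : ∀ x, a (c x) = c (a x) := fun x => DFunLike.congr_fun hac x
  have hpa' : ∀ x, p (a x) = a (p x) := fun x => DFunLike.congr_fun hpa x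
  have hpc' : ∀ x, p (c x) = c (p x) := fun x => DFunLike.congr_fun hpc x
  have hπx : ∀ x, πplus x = ((2 * r : ℝ) : ℂ)⁻¹ • (((r : ℝ) : ℂ) • x + a x) := fun x => by
    rw [hπ]; rfl
  have hcπ : ∀ x, c (πplus x) = πplus (c x) := fun x => by
    rw [hπx, hπx, map_smul, map_add, map_smul, hac']
  have hpπ : ∀ x, p (πplus x) = πplus (p x) := fun x => by
    rw [hπx, hπx, map_smul, map_add, map_smul, hpa']
  have ht2 : ((t ^ 2 : ℝ) : ℂ) ≠ 0 := by
    exact_mod_cast (pow_pos ht 2).ne'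
  have hinj : ∀ x, c x = 0 ↔ x = 0 := fun x => by
    constructor
    · intro h
      have h2 := hcc' x
      rw [h, map_zero] at h2
      exact (smul_eq_zero.mp h2.symm).resolve_left ht2
    · rintro rfl
      exact map_zero c
  have hsum : c (u₂ + v₂) = -(a u₁ + v₁) := by
    rw [map_add, hcu₂, eq_neg_iff_add_eq_zero, ← heq1]
    abel
  have hau : p (πplus (a u₁)) = πplus (a u₁) := by
    rw [hpπ, hpa', hpu₁]
  have key : c (c v₁ - ((1 : W →L[ℂ] W) - p ∘L πplus) (u₂ + v₂)) =
      ((1 + t ^ 2 : ℝ) : ℂ) • v₁ + (a u₁ - πplus (a u₁)) := by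
    have e : ((1 : W →L[ℂ] W) - p ∘L πplus) (u₂ + v₂) =
      (u₂ + v₂) - p (πplus (u₂ + v₂)) := rfl
    rw [e, map_sub, map_sub, hcc', ← hpc', hcπ, hsum, map_neg, map_neg, map_add, map_add,
      hv₁, hau, Complex.ofReal_add, add_smul, Complex.ofReal_one, one_smul]
    abel
  rw [← hinj, key]
end
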